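/- Let R be a CI-ring with identity and A₁, …, Aₙ pairwise comaximal two-sided ideals such that each quotient R/Aᵢ has a finite unit group. Define the Euler function of an ideal A by φ(A) = |U(R/A)|, the cardinality of the group of units of R/A. Then φ(A₁A₂⋯Aₙ) = φ(A₁)·φ(A₂)⋯φ(Aₙ). -/

import Mathlib

open Pointwise

/-- The product of two two-sided ideals: the two-sided ideal generated by pointwise products. -/
def tmul {R : Type*} [Ring R] (A B : TwoSidedIdeal R) : TwoSidedIdeal R :=
  TwoSidedIdeal.span ((A : Set R) * (B : Set R))

/-- A CI-ring is a ring in which any two two-sided ideals commute. -/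
def IsCIRing (R : Type*) [Ring R] : Prop :=
  ∀ A B : TwoSidedIdeal R, tmul A B = tmul B A

/-- The ordered product of a list of two-sided ideals. -/
def tmulList {R : Type*} [Ring R] (l : List (TwoSidedIdeal R)) : TwoSidedIdeal R :=
  l.foldr tmul ⊤

/-!
Comaximal ideals `A`, `B` satisfy `AB = A ∩ B` as soon as `AB = BA`: if `a + b = 1`, then
`x = x a + x b` lies in `BA + AB`. An ideal comaximal with finitely many ideals is comaximal with
their intersection, so `A₁ ⋯ Aₙ = ⋂ Aᵢ` in a CI-ring, and the Chinese remainder theorem identifies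
`R / A₁ ⋯ Aₙ` with `∏ R / Aᵢ`, whose units are the families of units.
-/

open Function

section Comaximal

variable {R : Type*} [NonAssocRing R]

theorem codisjoint_iff_exists_add_eq_one {A B : TwoSidedIdeal R} :
    Codisjoint A B ↔ ∃ a ∈ A, ∃ b ∈ B, a + b = 1 := by
  rw [codisjoint_iff, ← TwoSidedIdeal.one_mem_iff, TwoSidedIdeal.mem_sup]

theorem codisjoint_inf_of_codisjoint {A B C : TwoSidedIdeal R} (hB : Codisjoint A B)
    (hC : Codisjoint A C) : Codisjoint A (B ⊓ C) := by
  obtain ⟨a, ha, b, hb, hab⟩ := codisjoint_iff_exists_add_eq_one.1 hB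
  obtain ⟨a', ha', c, hc, hac⟩ := codisjoint_iff_exists_add_eq_one.1 hC
  refine codisjoint_iff_exists_add_eq_one.2 ⟨a + b * a', ?_, b * c, ?_, ?_⟩
  · exact A.add_mem ha (A.mul_mem_left _ _ ha')
  · exact (TwoSidedIdeal.mem_inf _).2 ⟨B.mul_mem_right _ _ hb, C.mul_mem_left _ _ hc⟩
  · rw [add_assoc, ← mul_add, hac, mul_one, hab]

theorem codisjoint_iInf_of_forall_codisjoint {ι : Type*} [Finite ι] {A : TwoSidedIdeal R}
    {B : ι → TwoSidedIdeal R} (h : ∀ i, Codisjoint A (B i)) : Codisjoint A (⨅ i, B i) := by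
  cases nonempty_fintype ι
  rw [← Finset.inf_univ_eq_iInf]
  exact Finset.inf_induction codisjoint_top_right
    (fun _ hB _ hC => codisjoint_inf_of_codisjoint hB hC) fun i _ => h i

end Comaximal

section ChineseRemainder

variable {R ι : Type*} [NonAssocRing R] {A : ι → TwoSidedIdeal R}

theorem ringCon_mk'_eq_iff {I : TwoSidedIdeal R} {x y : R} :
    I.ringCon.mk' x = I.ringCon.mk' y ↔ x - y ∈ I :=
  (RingCon.eq I.ringCon).trans (I.rel_iff x y)

variable (A) in
theorem ringCon_iInf_eq_ker_pi :
    (⨅ i, A i).ringCon = RingCon.ker (RingHom.pi fun i => (A i).ringCon.mk') := by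
  ext x y
  rw [TwoSidedIdeal.rel_iff, TwoSidedIdeal.mem_iInf, RingCon.ker_apply, funext_iff]
  exact forall_congr' fun i => ringCon_mk'_eq_iff.symm

theorem exists_one_sub_mem_and_forall_ne_mem [Finite ι] (hA : Pairwise (Codisjoint on A)) (i : ι) :
    ∃ e, 1 - e ∈ A i ∧ ∀ j ≠ i, e ∈ A j := by
  have hi : Codisjoint (A i) (⨅ j : {j // j ≠ i}, A j) :=
    codisjoint_iInf_of_forall_codisjoint fun j => hA j.2.symm
  obtain ⟨a, ha, e, he, hae⟩ := codisjoint_iff_exists_add_eq_one.1 hi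
  refine ⟨e, ?_, fun j hj => (TwoSidedIdeal.mem_iInf _).1 he ⟨j, hj⟩⟩
  rwa [← hae, add_sub_cancel_right]

theorem pi_mk'_surjective_of_pairwise_codisjoint [Finite ι] (hA : Pairwise (Codisjoint on A)) :
    Surjective (RingHom.pi fun i => (A i).ringCon.mk') := by
  cases nonempty_fintype ι
  intro y
  choose x hx using fun i => (A i).ringCon.mk'_surjective (y i)
  choose e he_one he_mem using exists_one_sub_mem_and_forall_ne_mem hA
  refine ⟨∑ j, x j * e j, funext fun i => ?_⟩
  have h_diag : (A i).ringCon.mk' (e i) = 1 := by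
    rw [← map_one (A i).ringCon.mk', eq_comm, ringCon_mk'_eq_iff]
    exact he_one i
  have h_off_diag : ∀ j ≠ i, (A i).ringCon.mk' (e j) = 0 := fun j hj => by
    rw [← map_zero (A i).ringCon.mk', ringCon_mk'_eq_iff, sub_zero]
    exact he_mem j i hj.symm
  calc (A i).ringCon.mk' (∑ j, x j * e j)
      = ∑ j, (A i).ringCon.mk' (x j) * (A i).ringCon.mk' (e j) := by simp only [map_sum, map_mul]
    _ = (A i).ringCon.mk' (x i) * (A i).ringCon.mk' (e i) :=
        Fintype.sum_eq_single i fun j hj => by rw [h_off_diag j hj, mul_zero]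
    _ = y i := by rw [h_diag, mul_one, hx]

/-- The **Chinese remainder theorem** for two-sided ideals: the canonical map
`R / ⋂ᵢ Aᵢ → ∏ᵢ R / Aᵢ` is a ring isomorphism for finitely many pairwise comaximal `Aᵢ`. -/
noncomputable def quotientIInfRingEquivPiQuotient [Finite ι] (hA : Pairwise (Codisjoint on A)) :
    (⨅ i, A i).ringCon.Quotient ≃+* ∀ i, (A i).ringCon.Quotient :=
  RingEquiv.ofBijective
    ((⨅ i, A i).ringCon.lift (RingHom.pi fun i => (A i).ringCon.mk') (ringCon_iInf_eq_ker_pi A).le)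
    (RingCon.lift_bijective_iff.2
      ⟨ringCon_iInf_eq_ker_pi A, pi_mk'_surjective_of_pairwise_codisjoint hA⟩)

end ChineseRemainder

section Product

variable {R : Type*} [Ring R] {A B : TwoSidedIdeal R}

theorem mul_mem_tmul {a b : R} (ha : a ∈ A) (hb : b ∈ B) : a * b ∈ tmul A B :=
  TwoSidedIdeal.subset_span (Set.mul_mem_mul ha hb)

variable (A B) in
theorem tmul_le_inf : tmul A B ≤ A ⊓ B := by
  refine TwoSidedIdeal.span_le.2 ?_
  rintro _ ⟨a, ha, b, hb, rfl⟩
  exact (TwoSidedIdeal.mem_inf _).2 ⟨A.mul_mem_right _ _ ha, B.mul_mem_left _ _ hb⟩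

theorem tmul_eq_inf_of_codisjoint (hcomm : tmul A B = tmul B A) (h : Codisjoint A B) :
    tmul A B = A ⊓ B := by
  refine le_antisymm (tmul_le_inf A B) fun x hx => ?_
  obtain ⟨hxA, hxB⟩ := (TwoSidedIdeal.mem_inf _).1 hx
  obtain ⟨a, ha, b, hb, hab⟩ := codisjoint_iff_exists_add_eq_one.1 h
  have hxa : x * a ∈ tmul A B := hcomm ▸ mul_mem_tmul hxB ha
  have hxb : x * b ∈ tmul A B := mul_mem_tmul hxA hb
  rw [← mul_one x, ← hab, mul_add]
  exact (tmul A B).add_mem hxa hxb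

theorem IsCIRing.tmulList_ofFn_eq_iInf (hR : IsCIRing R) {n : ℕ} {A : Fin n → TwoSidedIdeal R}
    (hA : Pairwise (Codisjoint on A)) : tmulList (List.ofFn A) = ⨅ i, A i := by
  induction n with
  | zero => rw [List.ofFn_zero, iInf_of_empty]; rfl
  | succ n ih =>
    have h_tail : tmulList (List.ofFn fun i : Fin n => A i.succ) = ⨅ i : Fin n, A i.succ :=
      ih fun i j hij => hA ((Fin.succ_injective n).ne hij)
    have h_head : Codisjoint (A 0) (⨅ i : Fin n, A i.succ) :=
      codisjoint_iInf_of_forall_codisjoint fun i => hA (Fin.succ_ne_zero i).symm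
    calc tmulList (List.ofFn A)
        = tmul (A 0) (tmulList (List.ofFn fun i : Fin n => A i.succ)) := by
          rw [List.ofFn_succ]; rfl
      _ = A 0 ⊓ ⨅ i : Fin n, A i.succ := by
          rw [h_tail, tmul_eq_inf_of_codisjoint (hR _ _) h_head]
      _ = ⨅ i, A i := by
          ext x
          simp only [TwoSidedIdeal.mem_inf, TwoSidedIdeal.mem_iInf, Fin.forall_fin_succ]

end Product

theorem euler_function_multiplicative_general {R : Type*} [Ring R] (hR : IsCIRing R)
    {n : ℕ} (A : Fin n → TwoSidedIdeal R) (hco : ∀ i j, i ≠ j → A i ⊔ A j = ⊤) :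
    Cardinal.mk ((tmulList (List.ofFn A)).ringCon.Quotient)ˣ =
      ∏ i, Cardinal.mk ((A i).ringCon.Quotient)ˣ := by
  have hA : Pairwise (Codisjoint on A) := fun i j hij => codisjoint_iff.2 (hco i j hij)
  have units_equiv : ((⨅ i, A i).ringCon.Quotient)ˣ ≃* ∀ i, ((A i).ringCon.Quotient)ˣ :=
    (Units.mapEquiv (quotientIInfRingEquivPiQuotient hA).toMulEquiv).trans MulEquiv.piUnits
  rw [hR.tmulList_ofFn_eq_iInf hA, Cardinal.mk_congr units_equiv.toEquiv, Cardinal.mk_pi,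
    Cardinal.prod_eq_of_fintype, Cardinal.lift_uzero]

/-- The Euler function of ideals, φ(A) = |U(R/A)|, is multiplicative on pairwise
comaximal ideals of a CI-ring. -/
theorem euler_function_multiplicative {R : Type*} [Ring R] (hR : IsCIRing R)
    {n : ℕ} (A : Fin n → TwoSidedIdeal R) (hco : ∀ i j, i ≠ j → A i ⊔ A j = ⊤)
    (hfin : ∀ i, Finite ((A i).ringCon.Quotient)ˣ) :
    Nat.card ((tmulList (List.ofFn A)).ringCon.Quotient)ˣ =
      ∏ i, Nat.card ((A i).ringCon.Quotient)ˣ := by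
  simp only [Nat.card, euler_function_multiplicative_general hR A hco, map_prod]
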